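/- Let n ≥ 2 be a natural number and let S be the symplectic group Sp₄(F), where F is the finite field with 2^n elements, i.e. the group of 4×4 matrices over F preserving the standard symplectic form. Then for every element x of S whose order is an odd prime, there exists g ∈ S such that 3 divides the order of the subgroup of S generated by x and g⁻¹·x·g. -/

import Mathlib

/-!
If `ω(v, x v)` vanished for every `v`, polarization and the invariance of `ω` would force
`x ^ 2 = 1`; so an element `x` with `x ^ 2 ≠ 1` moves some `v` to a vector `u = x v` with
`ω(v, u) ≠ 0`. The symplectic transvections along `u` and `v` with coefficient `ω(v, u)⁻¹` satisfy
the braid relation, and in characteristic two they are involutions, so their product has order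
three. Since `x` conjugates the transvection along `v` to the transvection `g` along `u`, this
product is the commutator `x⁻¹ * (g⁻¹ * x * g)`.
-/

open Matrix

theorem orderOf_mul_eq_three_of_braid {G : Type*} [Group G] {a b : G} (ha : a * a = 1)
    (hb : b * b = 1) (hab : a * b * a = b * a * b) (hne : a ≠ b) : orderOf (a * b) = 3 := by
  have : Fact (Nat.Prime 3) := ⟨Nat.prime_three⟩
  refine orderOf_eq_prime ?_ fun h => hne ?_
  · calc (a * b) ^ 3 = a * b * a * (b * a * b) := by simp only [pow_succ, pow_zero]; group
      _ = a * b * a * (a * b * a) := by rw [hab]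
      _ = a * (b * (a * a) * b) * a := by group
      _ = 1 := by simp only [ha, hb, mul_one]
  · rw [eq_inv_of_mul_eq_one_left h, inv_eq_of_mul_eq_one_left hb]

theorem sq_ne_one_of_odd_orderOf {G : Type*} [Monoid G] {x : G} (hodd : Odd (orderOf x))
    (hx : x ≠ 1) : x ^ 2 ≠ 1 := fun h =>
  hx <| orderOf_eq_one_iff.mp <|
    Nat.Coprime.eq_one_of_dvd hodd.coprime_two_right (orderOf_dvd_of_pow_eq_one h)

theorem orderOf_inv_mul_dvd_natCard_closure_pair {G : Type*} [Group G] (x y : G) :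
    orderOf (x⁻¹ * y) ∣ Nat.card (Subgroup.closure {x, y}) :=
  Subgroup.orderOf_dvd_natCard _ <| mul_mem
    (inv_mem (Subgroup.subset_closure (Set.mem_insert x {y})))
    (Subgroup.subset_closure (Set.mem_insert_of_mem x rfl))

section SymplecticForm

variable (l R : Type*) [Fintype l] [DecidableEq l] [CommRing R]

/-- The standard symplectic form `ω(v, w) = vᵀ J w` on column vectors. -/
def symplecticForm : LinearMap.BilinForm R (l ⊕ l → R) :=
  toBilin' (J l R)

variable {l R}

theorem symplecticForm_apply (v w : l ⊕ l → R) : symplecticForm l R v w = v ⬝ᵥ J l R *ᵥ w :=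
  toBilin'_apply' _ v w

theorem symplecticForm_isAlt : (symplecticForm l R).IsAlt := fun v => by
  simp only [symplecticForm_apply, J, dotProduct, Fintype.sum_sum_type, fromBlocks_mulVec,
    Sum.elim_inl, Sum.elim_inr, zero_mulVec, neg_mulVec, one_mulVec, Pi.neg_apply,
    Function.comp_apply, zero_add, add_zero, mul_neg, Finset.sum_neg_distrib,
    mul_comm, neg_add_cancel]

theorem symplecticForm_separatingRight : (symplecticForm l R).SeparatingRight :=
  (Nondegenerate.of_det_mem_nonZeroDivisors
    (isUnit_det_J l R).mem_nonZeroDivisors).separatingRight.toBilin'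

theorem mem_symplecticGroup_iff_symplecticForm {A : Matrix (l ⊕ l) (l ⊕ l) R} :
    A ∈ symplecticGroup l R ↔
      ∀ v w, symplecticForm l R (A *ᵥ v) (A *ᵥ w) = symplecticForm l R v w := by
  rw [SymplecticGroup.mem_iff', ← toBilin'.injective.eq_iff, ← toBilin'_comp, LinearMap.ext_iff₂]
  rfl

theorem symplecticForm_mulVec_mulVec (x : symplecticGroup l R) (v w : l ⊕ l → R) :
    symplecticForm l R (x.1 *ᵥ v) (x.1 *ᵥ w) = symplecticForm l R v w :=
  mem_symplecticGroup_iff_symplecticForm.mp x.2 v w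

theorem symplecticGroup_ext {x y : symplecticGroup l R} (h : ∀ v, x.1 *ᵥ v = y.1 *ᵥ v) : x = y :=
  Subtype.ext (mulVec_injective (funext h))

theorem mul_mulVec_symplecticGroup (x y : symplecticGroup l R) (v : l ⊕ l → R) :
    (x * y).1 *ᵥ v = x.1 *ᵥ y.1 *ᵥ v :=
  (mulVec_mulVec v x.1 y.1).symm

theorem sq_eq_one_of_symplecticForm_mulVec_self_eq_zero {x : symplecticGroup l R}
    (h : ∀ v, symplecticForm l R v (x.1 *ᵥ v) = 0) : x ^ 2 = 1 := by
  have polarized (v w : l ⊕ l → R) :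
      symplecticForm l R v (x.1 *ᵥ w) = symplecticForm l R (x.1 *ᵥ v) w := by
    have hvw := h (v + w)
    rw [mulVec_add, map_add, map_add, LinearMap.add_apply, LinearMap.add_apply, h, h, zero_add,
      add_zero] at hvw
    rw [eq_neg_of_add_eq_zero_right hvw, symplecticForm_isAlt.neg_eq]
  refine symplecticGroup_ext fun w => sub_eq_zero.mp <| symplecticForm_separatingRight _ fun v => ?_
  rw [map_sub, sub_eq_zero, pow_two, mul_mulVec_symplecticGroup, polarized,
    symplecticForm_mulVec_mulVec, Submonoid.coe_one, one_mulVec]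

end SymplecticForm

section SymplecticTransvection

variable {l R : Type*} [Fintype l] [DecidableEq l] [CommRing R]

/-- The symplectic transvection `w ↦ w + c ω(u, w) u`. -/
def symplecticTransvection (c : R) (u : l ⊕ l → R) : symplecticGroup l R :=
  ⟨(LinearMap.transvection (c • symplecticForm l R u) u).toMatrix',
    mem_symplecticGroup_iff_symplecticForm.mpr fun v w => by
      simp only [LinearMap.toMatrix'_mulVec, LinearMap.transvection.apply, map_add, map_smul,
        LinearMap.add_apply, LinearMap.smul_apply, smul_eq_mul, symplecticForm_isAlt.self_eq_zero,
        ← symplecticForm_isAlt.neg_eq u v]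
      ring⟩

theorem symplecticTransvection_mulVec (c : R) (u w : l ⊕ l → R) :
    (symplecticTransvection c u).1 *ᵥ w = w + (c * symplecticForm l R u w) • u :=
  LinearMap.toMatrix'_mulVec _ w

theorem symplecticTransvection_smul (c a : R) (u : l ⊕ l → R) :
    symplecticTransvection c (a • u) = symplecticTransvection (c * a ^ 2) u :=
  symplecticGroup_ext fun w => by
    simp only [symplecticTransvection_mulVec, map_smul, LinearMap.smul_apply, smul_eq_mul,
      smul_smul]
    ring_nf

theorem mul_symplecticTransvection (x : symplecticGroup l R) (c : R) (u : l ⊕ l → R) :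
    x * symplecticTransvection c u = symplecticTransvection c (x.1 *ᵥ u) * x :=
  symplecticGroup_ext fun w => by
    simp only [mul_mulVec_symplecticGroup, symplecticTransvection_mulVec, mulVec_add, mulVec_smul,
      symplecticForm_mulVec_mulVec]

theorem symplecticTransvection_mul_self [CharP R 2] (c : R) (u : l ⊕ l → R) :
    symplecticTransvection c u * symplecticTransvection c u = 1 :=
  symplecticGroup_ext fun w => by
    simp only [mul_mulVec_symplecticGroup, symplecticTransvection_mulVec, map_add, map_smul,
      symplecticForm_isAlt.self_eq_zero, smul_zero, add_zero, add_assoc, ← add_smul,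
      CharTwo.add_self_eq_zero, zero_smul, Submonoid.coe_one, one_mulVec]

theorem symplecticTransvection_braid {c : R} {u v : l ⊕ l → R}
    (h : (c * symplecticForm l R u v) ^ 2 = 1) :
    symplecticTransvection c u * symplecticTransvection c v * symplecticTransvection c u =
      symplecticTransvection c v * symplecticTransvection c u * symplecticTransvection c v := by
  -- The product `T_u T_v` maps `u` to a multiple `a v` with `a ^ 2 = 1`, so it conjugates `T_u`
  -- to `T_v`.
  have hu : (symplecticTransvection c u * symplecticTransvection c v).1 *ᵥ u =
      (-(c * symplecticForm l R u v)) • v := by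
    simp only [mul_mulVec_symplecticGroup, symplecticTransvection_mulVec, map_add, map_smul,
      symplecticForm_isAlt.self_eq_zero, smul_eq_mul, ← symplecticForm_isAlt.neg_eq u v]
    linear_combination (norm := module) -(h • u)
  rw [mul_symplecticTransvection, hu, symplecticTransvection_smul, neg_sq, h, mul_one, mul_assoc]

theorem symplecticTransvection_ne {c : R} {u v : l ⊕ l → R}
    (h : c * symplecticForm l R u v ^ 2 ≠ 0) :
    symplecticTransvection c u ≠ symplecticTransvection c v := fun heq => h <| by
  have hv : (c * symplecticForm l R u v) • u = 0 := by
    simpa [symplecticTransvection_mulVec, symplecticForm_isAlt.self_eq_zero] using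
      congrArg (fun y : symplecticGroup l R => y.1 *ᵥ v) heq
  simpa only [map_smul, LinearMap.smul_apply, smul_eq_mul, mul_assoc, ← pow_two, map_zero,
    LinearMap.zero_apply] using congrArg (symplecticForm l R · v) hv

theorem orderOf_symplecticTransvection_mul [CharP R 2] {c : R} {u v : l ⊕ l → R}
    (h : (c * symplecticForm l R u v) ^ 2 = 1) :
    orderOf (symplecticTransvection c u * symplecticTransvection c v) = 3 := by
  have : Nontrivial R := CharP.nontrivial_of_char_ne_one (v := 2) (by decide)
  refine orderOf_mul_eq_three_of_braid (symplecticTransvection_mul_self c u)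
    (symplecticTransvection_mul_self c v) (symplecticTransvection_braid h)
    (symplecticTransvection_ne fun h0 => one_ne_zero (α := R) ?_)
  rw [← h, mul_pow, pow_two c, mul_assoc, h0, mul_zero]

theorem orderOf_inv_mul_conj_symplecticTransvection [CharP R 2] {x : symplecticGroup l R} {c : R}
    {v : l ⊕ l → R} (h : (c * symplecticForm l R v (x.1 *ᵥ v)) ^ 2 = 1) :
    orderOf (x⁻¹ * ((symplecticTransvection c (x.1 *ᵥ v))⁻¹ * x *
      symplecticTransvection c (x.1 *ᵥ v))) = 3 := by
  rw [inv_eq_of_mul_eq_one_left (symplecticTransvection_mul_self c _),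
    ← mul_symplecticTransvection, mul_assoc, inv_mul_cancel_left]
  exact orderOf_symplecticTransvection_mul h

end SymplecticTransvection

theorem beta3_Sp4_le_two_general {l F : Type*} [Fintype l] [DecidableEq l] [Field F] [CharP F 2]
    (x : symplecticGroup l F) (hx : x ^ 2 ≠ 1) :
    ∃ g : symplecticGroup l F, orderOf (x⁻¹ * (g⁻¹ * x * g)) = 3 := by
  obtain ⟨v, hv⟩ : ∃ v, symplecticForm l F v (x.1 *ᵥ v) ≠ 0 := by
    contrapose! hx
    exact sq_eq_one_of_symplecticForm_mulVec_self_eq_zero hx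
  refine ⟨symplecticTransvection (symplecticForm l F v (x.1 *ᵥ v))⁻¹ (x.1 *ᵥ v), ?_⟩
  apply orderOf_inv_mul_conj_symplecticTransvection
  rw [inv_mul_cancel₀ hv, one_pow]

theorem beta3_Sp4_le_two (n : ℕ) (hn : 2 ≤ n)
    (x : Matrix.symplecticGroup (Fin 2) (GaloisField 2 n))
    (hprime : (orderOf x).Prime) (hodd : Odd (orderOf x)) :
    ∃ g : Matrix.symplecticGroup (Fin 2) (GaloisField 2 n),
      3 ∣ Nat.card (Subgroup.closure {x, g⁻¹ * x * g} :
        Subgroup (Matrix.symplecticGroup (Fin 2) (GaloisField 2 n))) := by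
  obtain ⟨g, hg⟩ := beta3_Sp4_le_two_general x
    (sq_ne_one_of_odd_orderOf hodd fun h => hprime.ne_one (orderOf_eq_one_iff.mpr h))
  exact ⟨g, hg ▸ orderOf_inv_mul_dvd_natCard_closure_pair x (g⁻¹ * x * g)⟩
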